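/- Under the stated setup, given samples z_1,…,z_M ∈ Z, define W(t,x,p,q) = (1/M) Σ_{m=1}^M [∏_{i=1}^L √(a_i(z_m)) e^{−√(a_i(z_m))(p_i+q_i)}] u(t,x,z_m) for p,q ∈ ℝ^L. Then: (i) W satisfies the phase-space Schrödinger equation iħ ∂_t W(t,x,p,q) = −(ħ²/2) Δ_x W(t,x,p,q) + Σ_{i=1}^L b_i(x) ∂_{p_i} ∂_{p_i} W(t,x,p,q) for all (t,x,p,q); and (ii) ∂_{p_i} W(t,x,p,q) − ∂_{q_i} W(t,x,p,q) = 0 for every i and all (t,x,p,q), in particular on the boundary {p_i = 0}; so neither the equation nor the boundary condition depends on the samples z_m. -/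

import Mathlib

open Real MeasureTheory

noncomputable section

/-- Partial derivative of `f` in the `i`-th coordinate at `x`. -/
def pd {ι : Type*} [DecidableEq ι] {E : Type*} [NormedAddCommGroup E] [NormedSpace ℝ E]
    (i : ι) (f : (ι → ℝ) → E) (x : ι → ℝ) : E :=
  deriv (fun s => f (Function.update x i s)) (x i)

/-- Second partial derivative of `f` in the `i`-th coordinate at `x`. -/
def pd2 {ι : Type*} [DecidableEq ι] {E : Type*} [NormedAddCommGroup E] [NormedSpace ℝ E]
    (i : ι) (f : (ι → ℝ) → E) (x : ι → ℝ) : E :=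
  deriv (deriv (fun s => f (Function.update x i s))) (x i)

/-- Laplacian of `f` at `x`. -/
def plap {ι : Type*} [DecidableEq ι] [Fintype ι] {E : Type*} [NormedAddCommGroup E]
    [NormedSpace ℝ E] (f : (ι → ℝ) → E) (x : ι → ℝ) : E :=
  ∑ i, pd2 i f x

/-!
For `rᵢ² = aᵢ(z)` the weight `∏ i, rᵢ e^{-rᵢ wᵢ}` is an eigenfunction of every `∂²/∂wᵢ²`, with
eigenvalue `aᵢ(z)`. Multiplying `u(t, x, z)` by it therefore trades the `z`-dependent potential
`∑ i, aᵢ(z) bᵢ(x)` for the `z`-independent operator `∑ i, bᵢ(x) ∂²/∂wᵢ²`, and linearity carries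
the resulting equation over to averages over samples. The boundary identity holds because `W`
depends on `(p, q)` only through `w = p + q`.
-/

section LinearCombination

variable {ι σ 𝔸 : Type*} [DecidableEq ι] [Fintype ι] [NormedRing 𝔸] [NormedAlgebra ℝ 𝔸]
  {s : Finset σ}

theorem deriv_sum_const_mul (c : σ → 𝔸) {f : σ → ℝ → 𝔸} {t : ℝ}
    (hf : ∀ m ∈ s, DifferentiableAt ℝ (f m) t) :
    deriv (fun t' => ∑ m ∈ s, c m * f m t') t = ∑ m ∈ s, c m * deriv (f m) t :=
  (HasDerivAt.fun_sum fun m hm => (hf m hm).hasDerivAt.const_mul (c m)).deriv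

theorem pd2_sum_const_mul (c : σ → 𝔸) {f : σ → (ι → ℝ) → 𝔸}
    (hf : ∀ m ∈ s, ContDiff ℝ 2 (f m)) (i : ι) (x : ι → ℝ) :
    pd2 i (fun y => ∑ m ∈ s, c m * f m y) x = ∑ m ∈ s, c m * pd2 i (f m) x := by
  have slice_contDiff : ∀ m ∈ s, ContDiff ℝ 2 fun t => f m (Function.update x i t) :=
    fun m hm => (hf m hm).comp (contDiff_update 2 x i)
  have deriv_slice : deriv (fun t => ∑ m ∈ s, c m * f m (Function.update x i t))
      = fun t => ∑ m ∈ s, c m * deriv (fun t' => f m (Function.update x i t')) t :=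
    funext fun t => deriv_sum_const_mul c fun m hm =>
      (slice_contDiff m hm).differentiable two_ne_zero t
  rw [pd2, deriv_slice]
  exact deriv_sum_const_mul c fun m hm => (slice_contDiff m hm).differentiable_deriv_two (x i)

theorem plap_sum_const_mul (c : σ → 𝔸) {f : σ → (ι → ℝ) → 𝔸}
    (hf : ∀ m ∈ s, ContDiff ℝ 2 (f m)) (x : ι → ℝ) :
    plap (fun y => ∑ m ∈ s, c m * f m y) x = ∑ m ∈ s, c m * plap (f m) x := by
  simp only [plap, pd2_sum_const_mul c hf, Finset.mul_sum]
  exact Finset.sum_comm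

end LinearCombination

section Translation

variable {ι E : Type*} [DecidableEq ι] [NormedAddCommGroup E] [NormedSpace ℝ E]

theorem update_add_right (x v : ι → ℝ) (i : ι) (t : ℝ) :
    Function.update x i t + v = Function.update (x + v) i (t + v i) := by
  simpa only [Function.update_eq_self] using (Function.update_add x v i t (v i)).symm

theorem pd_comp_add_right (i : ι) (f : (ι → ℝ) → E) (x v : ι → ℝ) :
    pd i (fun y => f (y + v)) x = pd i f (x + v) := by
  simp only [pd, update_add_right, Pi.add_apply]
  exact deriv_comp_add_const (fun t => f (Function.update (x + v) i t)) (v i) (x i)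

theorem pd_comp_add_left (i : ι) (f : (ι → ℝ) → E) (v x : ι → ℝ) :
    pd i (fun y => f (v + y)) x = pd i f (v + x) := by
  simpa only [add_comm] using pd_comp_add_right i f x v

theorem pd2_comp_add_right (i : ι) (f : (ι → ℝ) → E) (x v : ι → ℝ) :
    pd2 i (fun y => f (y + v)) x = pd2 i f (x + v) := by
  have deriv_slice : deriv (fun t => f (Function.update (x + v) i (t + v i)))
      = fun t => deriv (fun t' => f (Function.update (x + v) i t')) (t + v i) :=
    funext fun t => deriv_comp_add_const (fun t' => f (Function.update (x + v) i t')) (v i) t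
  simp only [pd2, update_add_right, Pi.add_apply, deriv_slice]
  exact deriv_comp_add_const (deriv fun t => f (Function.update (x + v) i t)) (v i) (x i)

end Translation

section ExpWeight

variable {κ : Type*} [Fintype κ]

/-- The exponential weight `∏ i, rᵢ e^{-rᵢ wᵢ}` with complex rates `r`. The phase-space transform
evaluates it at `w = p + q`, with `rᵢ` a square root of the `i`-th coefficient of the potential. -/
def expWeight (r : κ → ℂ) (w : κ → ℝ) : ℂ :=
  ∏ i, r i * Complex.exp (-r i * w i)

theorem contDiff_expWeight {n : WithTop ℕ∞} (r : κ → ℂ) : ContDiff ℝ n (expWeight r) := by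
  have hcast (i : κ) : ContDiff ℝ n fun w : κ → ℝ => (w i : ℂ) :=
    Complex.ofRealCLM.contDiff.comp (contDiff_apply ℝ ℝ i)
  exact contDiff_prod fun i _ => contDiff_const.mul (contDiff_const.mul (hcast i)).cexp

variable [DecidableEq κ]

theorem hasDerivAt_expWeight_update (r : κ → ℂ) (w : κ → ℝ) (i : κ) (t : ℝ) :
    HasDerivAt (fun t' => expWeight r (Function.update w i t'))
      (-r i * expWeight r (Function.update w i t)) t := by
  have slice_eq (t' : ℝ) : expWeight r (Function.update w i t')
      = r i * Complex.exp (-r i * t') * ∏ j ∈ {i}ᶜ, r j * Complex.exp (-r j * w j) := by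
    rw [expWeight, Fintype.prod_eq_mul_prod_compl i, Function.update_self]
    congr 1
    refine Finset.prod_congr rfl fun j hj => ?_
    rw [Function.update_of_ne (by simpa using hj)]
  have factor : HasDerivAt (fun t' : ℝ => r i * Complex.exp (-r i * t'))
      (r i * (Complex.exp (-r i * t) * (-r i * 1))) t :=
    ((Complex.ofRealCLM.hasDerivAt.const_mul (-r i)).cexp).const_mul (r i)
  simp only [slice_eq]
  exact (factor.mul_const _).congr_deriv (by ring)

theorem pd2_expWeight (r : κ → ℂ) (w : κ → ℝ) (i : κ) :
    pd2 i (expWeight r) w = r i ^ 2 * expWeight r w := by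
  have deriv_slice : deriv (fun t => expWeight r (Function.update w i t))
      = fun t => -r i * expWeight r (Function.update w i t) :=
    funext fun t => (hasDerivAt_expWeight_update r w i t).deriv
  simp only [pd2, deriv_slice, deriv_const_mul_field, Function.update_eq_self]
  ring

theorem pd2_sum_mul_expWeight_add {σ : Type*} [Fintype σ] (v : σ → ℂ) (r : σ → κ → ℂ)
    (p q : κ → ℝ) (i : κ) :
    pd2 i (fun p' => ∑ m, v m * expWeight (r m) (p' + q)) p
      = ∑ m, v m * (r m i ^ 2 * expWeight (r m) (p + q)) := by
  rw [pd2_comp_add_right i (fun w => ∑ m, v m * expWeight (r m) w),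
    pd2_sum_const_mul v fun m _ => contDiff_expWeight (r m)]
  simp only [pd2_expWeight]

end ExpWeight

theorem schrodinger_phase_space_doubled_general
    {ι κ σ Z : Type*} [Fintype ι] [DecidableEq ι] [Fintype κ] [DecidableEq κ] [Fintype σ]
    (hbar : ℂ) (a r : κ → Z → ℂ) (hr : ∀ i z, r i z ^ 2 = a i z) (b : κ → (ι → ℝ) → ℂ)
    (u : ℝ → (ι → ℝ) → Z → ℂ)
    (hut : ∀ x z, Differentiable ℝ fun t => u t x z)
    (hux : ∀ t z, ContDiff ℝ 2 fun x => u t x z)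
    (hSchr : ∀ t x z, Complex.I * hbar * deriv (fun s => u s x z) t
      = -(hbar ^ 2 / 2) * plap (fun y => u t y z) x + (∑ i, a i z * b i x) * u t x z)
    (zs : σ → Z) (c : σ → ℂ)
    (W : ℝ → (ι → ℝ) → (κ → ℝ) → (κ → ℝ) → ℂ)
    (hW : ∀ t x p q,
      W t x p q = ∑ m, c m * expWeight (fun i => r i (zs m)) (p + q) * u t x (zs m)) :
    (∀ t x p q, Complex.I * hbar * deriv (fun s => W s x p q) t
      = -(hbar ^ 2 / 2) * plap (fun y => W t y p q) x
        + ∑ i, b i x * pd2 i (fun p' => W t x p' q) p)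
    ∧ ∀ t x p q i, pd i (fun p' => W t x p' q) p - pd i (fun q' => W t x p q') q = 0 := by
  let w (m : σ) : (κ → ℝ) → ℂ := expWeight fun i => r i (zs m)
  have hW' (t x p q) : W t x p q = ∑ m, c m * u t x (zs m) * w m (p + q) := by
    simp only [hW, w, mul_right_comm]
  refine ⟨fun t x p q => ?_, fun t x p q i => ?_⟩
  · have potential : ∑ i, b i x * pd2 i (fun p' => W t x p' q) p
        = ∑ m, c m * w m (p + q) * ((∑ i, a i (zs m) * b i x) * u t x (zs m)) := by
      simp only [hW', w, pd2_sum_mul_expWeight_add, hr, Finset.mul_sum, Finset.sum_mul]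
      rw [Finset.sum_comm]
      exact Finset.sum_congr rfl fun m _ => Finset.sum_congr rfl fun i _ => by ring
    rw [potential]
    simp only [hW, plap_sum_const_mul _ fun m _ => hux t (zs m),
      deriv_sum_const_mul _ fun m _ => (hut x (zs m)).differentiableAt]
    rw [Finset.mul_sum, Finset.mul_sum, ← Finset.sum_add_distrib]
    refine Finset.sum_congr rfl fun m _ => ?_
    linear_combination (c m * w m (p + q)) * hSchr t x (zs m)
  · let F : (κ → ℝ) → ℂ := fun v => ∑ m, c m * u t x (zs m) * w m v
    simp only [hW']
    rw [pd_comp_add_right i F p q, pd_comp_add_left i F p q, sub_self]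

/-- the doubled averaged phase-space transform
`W(t,x,p,q) = (1/M) ∑ₘ (∏ i, √(aᵢ(zₘ)) e^{-√(aᵢ(zₘ))(pᵢ+qᵢ)}) u(t,x,zₘ)` for the
Schrödinger equation with uncertain potential `a(x,z) = ∑ i, aᵢ(z) bᵢ(x)` satisfies
(i) the deterministic phase-space Schrödinger equation
`ihbar ∂ₜW = -(hbar²/2) Δₓ W + ∑ i bᵢ(x) ∂_{pᵢ}∂_{pᵢ} W`, and
(ii) `∂_{pᵢ}W - ∂_{qᵢ}W = 0` for every `i`; neither depends on the samples `zₘ`. -/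
theorem schrodinger_phase_space_doubled
    (d L M : ℕ) (hd : 1 ≤ d) (hL : 1 ≤ L) (hM : 1 ≤ M)
    (hbar : ℝ) (hbar_pos : 0 < hbar)
    (Z : Type*) [Nonempty Z]
    (a : Fin L → Z → ℝ) (ha : ∀ i z, 0 < a i z)
    (b : Fin L → (Fin d → ℝ) → ℝ) (hb : ∀ i, ContDiff ℝ (⊤ : ℕ∞) (b i))
    (u : ℝ → (Fin d → ℝ) → Z → ℂ)
    (hu : ∀ z, ContDiff ℝ (⊤ : ℕ∞) (fun tx : ℝ × (Fin d → ℝ) => u tx.1 tx.2 z))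
    (hSchr : ∀ t x z, Complex.I * (hbar : ℂ) * deriv (fun s => u s x z) t
      = -((hbar : ℂ) ^ 2 / 2) * plap (fun y => u t y z) x
        + ((∑ i, a i z * b i x : ℝ) : ℂ) * u t x z)
    (zs : Fin M → Z)
    (W : ℝ → (Fin d → ℝ) → (Fin L → ℝ) → (Fin L → ℝ) → ℂ)
    (hW : ∀ t x p q, W t x p q = (1 / (M : ℂ)) * ∑ m,
      ((∏ i, Real.sqrt (a i (zs m)) * Real.exp (-Real.sqrt (a i (zs m)) * (p i + q i)) : ℝ) : ℂ)
        * u t x (zs m)) :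
    (∀ t x (p q : Fin L → ℝ),
      Complex.I * (hbar : ℂ) * deriv (fun s => W s x p q) t
        = -((hbar : ℂ) ^ 2 / 2) * plap (fun y => W t y p q) x
          + ∑ i, ((b i x : ℝ) : ℂ) * pd2 i (fun p' => W t x p' q) p)
    ∧ (∀ t x (p q : Fin L → ℝ) (i : Fin L),
        pd i (fun p' => W t x p' q) p - pd i (fun q' => W t x p q') q = 0) :=
  schrodinger_phase_space_doubled_general hbar (fun i z => a i z) (fun i z => √(a i z))
    (fun i z => mod_cast Real.sq_sqrt (ha i z).le) (fun i x => b i x) u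
    (fun x z => ((hu z).comp (contDiff_prodMk_left x)).differentiable (by simp))
    (fun t z => ((hu z).comp (contDiff_prodMk_right t)).of_le (WithTop.coe_le_coe.2 le_top))
    (mod_cast hSchr) zs (fun _ => 1 / M) W
    fun t x p q => by simp [hW, expWeight, Finset.mul_sum, mul_assoc]
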